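/- For every legal sequence σ of moves in the auxiliary game whose initial position and resulting position both equal the starting position P, the flow through the middle triangle vertex equals the flow through the corresponding cycle vertex: F(σ, i, 2) = F(σ, 0, 3i−1) for every i with 1 ≤ i ≤ m. -/

import Mathlib

/-!
The auxiliary game of Shitov, "Chess God's number grows exponentially".

Fix `m ≥ 1`.  The graph `G` has cycle vertices `(0,t)` for `t ∈ ℤ/3m` and triangle
vertices `(i,j)` for `1 ≤ i ≤ m`, `j ∈ {1,2,3}`.  We use 0-based indices: the
triangle vertex `(i,j)` of the paper (with `1 ≤ i ≤ m`, `1 ≤ j ≤ 3`) is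
`Vtx.tri ⟨i-1⟩ ⟨j-1⟩`, and its paired cycle vertex `(0, 3i+j-3)` is
`Vtx.cycle (pairC ⟨i-1⟩ ⟨j-1⟩)` where `pairC i j = 3*i + j + 1 (mod 3m)`.
-/

namespace AuxGame

/-- What occupies a vertex: nothing, the chip, or a switch. -/
inductive Occ : Type
  | empty : Occ
  | chip : Occ
  | switch : Occ
deriving DecidableEq

/-- Vertices of the graph `G`: the big cycle of length `3m`, and `m` triangles. -/
inductive Vtx (m : ℕ) : Type
  | cycle : ZMod (3 * m) → Vtx m
  | tri : Fin m → ZMod 3 → Vtx m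
deriving DecidableEq

/-- The cycle vertex paired with the triangle vertex `(i,j)` (0-based):
this is the vertex `(0, 3i+j-3)` of the paper. -/
def pairC {m : ℕ} (i : Fin m) (j : ZMod 3) : ZMod (3 * m) :=
  ((3 * i.val + j.val + 1 : ℕ) : ZMod (3 * m))

/-- Adjacency in `G`: consecutive vertices of the big cycle, and distinct
vertices of one triangle. -/
def Adjacent {m : ℕ} : Vtx m → Vtx m → Prop
  | .cycle t, .cycle t' => t' = t + 1 ∨ t' = t - 1
  | .tri i j, .tri i' j' => i = i' ∧ j ≠ j'
  | _, _ => False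

/-- `u` and `v` form a pair `{(i,j), (0,3i+j-3)}` (in either order). -/
def IsPair {m : ℕ} : Vtx m → Vtx m → Prop
  | .tri i j, .cycle t => t = pairC i j
  | .cycle t, .tri i j => t = pairC i j
  | _, _ => False

/-- A position of the auxiliary game: every vertex is empty, or carries the chip,
or carries (exactly) one switch; there is exactly one chip; and for every pair
`{(i,j), (0,3i+j-3)}` at least one of the two vertices carries a switch. -/
structure Pos (m : ℕ) where
  occ : Vtx m → Occ
  chip_exists_unique : ∃! v : Vtx m, occ v = Occ.chip
  switch_pair : ∀ (i : Fin m) (j : ZMod 3),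
    occ (Vtx.tri i j) = Occ.switch ∨ occ (Vtx.cycle (pairC i j)) = Occ.switch

/-- A single move: the chip moves from vertex `from'` to vertex `to'`,
transforming position `src` into position `dst`. -/
structure Move (m : ℕ) where
  src : Pos m
  dst : Pos m
  from' : Vtx m
  to' : Vtx m

/-- Legality of a single move: either a *jump* (the chip moves to an adjacent
vacant vertex of its triangle, or to an adjacent vacant vertex of the cycle),
or a *swap* (the chip, standing on one vertex of a pair, is exchanged with the
switch on the other vertex of that pair).  In both cases the destination gets
the chip, the source gets whatever was at the destination (nothing for a jump,
the switch for a swap), and all other vertices are unchanged. -/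
def Move.Legal {m : ℕ} (mv : Move m) : Prop :=
  mv.src.occ mv.from' = Occ.chip ∧
  ((Adjacent mv.from' mv.to' ∧ mv.src.occ mv.to' = Occ.empty) ∨
    (IsPair mv.from' mv.to' ∧ mv.src.occ mv.to' = Occ.switch)) ∧
  mv.dst.occ mv.to' = Occ.chip ∧
  mv.dst.occ mv.from' = mv.src.occ mv.to' ∧
  ∀ w : Vtx m, w ≠ mv.from' → w ≠ mv.to' → mv.dst.occ w = mv.src.occ w

/-- `Leads σ A B`: `σ` is a legal sequence of moves with initial position `A`
and resulting position `B` (each move is legal, and the resulting position of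
each move is the initial position of the next one). -/
inductive Leads {m : ℕ} : List (Move m) → Pos m → Pos m → Prop
  | nil (A : Pos m) : Leads [] A A
  | cons (mv : Move m) (σ : List (Move m)) (B : Pos m) :
      mv.Legal → Leads σ mv.dst B → Leads (mv :: σ) mv.src B

/-- `σ` is a legal sequence of moves. -/
def LegalSeq {m : ℕ} (σ : List (Move m)) : Prop :=
  ∃ A B : Pos m, Leads σ A B

/-- `#(σ, u, v)`: the number of single moves in `σ` carrying the chip from
vertex `u` to vertex `v` (used with `u`, `v` in one component, where such moves
are exactly jumps). -/
def jmpCount {m : ℕ} (σ : List (Move m)) (u v : Vtx m) : ℕ :=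
  (σ.filter fun mv => decide (mv.from' = u ∧ mv.to' = v)).length

/-- The successor of a vertex in its own component: `(0,t) ↦ (0,t+1)` and
`(i,j) ↦ (i,j+1 mod 3)`. -/
def nxt {m : ℕ} : Vtx m → Vtx m
  | .cycle t => .cycle (t + 1)
  | .tri i j => .tri i (j + 1)

/-- The predecessor of a vertex in its own component. -/
def prv {m : ℕ} : Vtx m → Vtx m
  | .cycle t => .cycle (t - 1)
  | .tri i j => .tri i (j - 1)

/-- Twice the flow through a vertex `v = (i₀,j₀)`:
`#(σ,i₀,j₀-1,j₀) + #(σ,i₀,j₀,j₀+1) - #(σ,i₀,j₀+1,j₀) - #(σ,i₀,j₀,j₀-1)` as an integer. -/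
def dflow {m : ℕ} (σ : List (Move m)) (v : Vtx m) : ℤ :=
  (jmpCount σ (prv v) v : ℤ) + (jmpCount σ v (nxt v) : ℤ)
    - (jmpCount σ (nxt v) v : ℤ) - (jmpCount σ v (prv v) : ℤ)

/-- The flow `F(σ, i₀, j₀)` through the vertex `v = (i₀,j₀)`. -/
def flow {m : ℕ} (σ : List (Move m)) (v : Vtx m) : ℚ :=
  (dflow σ v : ℚ) / 2

/-- `P` is the starting position: switches on `(i,1)`, `(i,3)`, `(0,3i-1)`
(0-based: `tri i 0`, `tri i 2`, `cycle (pairC i 1)`), the chip on some cycle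
vertex not of the form `(0,3i-1)`, and all other vertices empty. -/
def IsStarting {m : ℕ} (P : Pos m) : Prop :=
  (∀ i : Fin m,
    P.occ (Vtx.tri i 0) = Occ.switch ∧
    P.occ (Vtx.tri i 1) = Occ.empty ∧
    P.occ (Vtx.tri i 2) = Occ.switch ∧
    P.occ (Vtx.cycle (pairC i 1)) = Occ.switch) ∧
  ∃ t : ZMod (3 * m),
    (∀ i : Fin m, t ≠ pairC i 1) ∧
    P.occ (Vtx.cycle t) = Occ.chip ∧
    ∀ s : ZMod (3 * m), s ≠ t → (∀ i : Fin m, s ≠ pairC i 1) →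
      P.occ (Vtx.cycle s) = Occ.empty

end AuxGame

/-!
Every triangle starts with exactly one vacant vertex, and each move preserves this: a jump only
moves a vacancy within its component, and a swap touches no vacant vertex.

Call `(i,2)` and `(0,3i-1)` the middle pair of triangle `i`. Consider the potential that is `0`
unless the chip is on the middle pair, and is then `+1` or `-1` according to whether the vacancy
of triangle `i` is its first or its third vertex. Swaps do not change it. After a jump onto
`(i,2)` the vacancy is the vertex just left. After a jump onto `(0,3i-1)` from the partner of
`(i,j)`, both `(i,2)` and `(i,j)` must carry switches, so the vacancy is the third vertex of the
triangle. In both cases the potential is the contribution of the jump to the difference of the two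
flows; jumps leaving the middle pair are the time reversals of these. Hence the difference of the
flows (up to the factor `2`) telescopes to the change of the potential, which is zero along a
closed sequence.
-/

namespace AuxGame

variable {m : ℕ} {i : Fin m} {P : Pos m} {mv : Move m}

section Pairing

theorem pairC_injective2 : Function.Injective2 (pairC (m := m)) := by
  intro i i' j j' h
  have hcast : ((3 * i.val + j.val : ℕ) : ZMod (3 * m)) =
      ((3 * i'.val + j'.val : ℕ) : ZMod (3 * m)) := by
    simpa [pairC] using h
  have hi := i.isLt
  have hi' := i'.isLt
  have hj := ZMod.val_lt j
  have hj' := ZMod.val_lt j'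
  rw [ZMod.natCast_eq_natCast_iff', Nat.mod_eq_of_lt (by lia), Nat.mod_eq_of_lt (by lia)] at hcast
  exact ⟨Fin.ext (by lia), ZMod.val_injective 3 (by lia)⟩

theorem pairC_inj {i' : Fin m} {j j' : ZMod 3} : pairC i j = pairC i' j' ↔ i = i' ∧ j = j' :=
  pairC_injective2.eq_iff

theorem pairC_one_sub_one (i : Fin m) : pairC i 1 - 1 = pairC i 0 := by
  simp [pairC, ZMod.val_one]

theorem pairC_one_add_one (i : Fin m) : pairC i 1 + 1 = pairC i 2 := by
  have hval : (2 : ZMod 3).val = 2 := rfl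
  simp only [pairC, ZMod.val_one, hval]
  push_cast
  ring

theorem IsPair.symm {u v : Vtx m} (h : IsPair u v) : IsPair v u := by
  cases u <;> cases v <;> exact h

theorem IsPair.eq_middle_iff {u v : Vtx m} (h : IsPair u v) :
    (u = .tri i 1 ∨ u = .cycle (pairC i 1)) ↔ (v = .tri i 1 ∨ v = .cycle (pairC i 1)) := by
  cases u <;> cases v <;> simp_all [IsPair, pairC_inj]

end Pairing

section Adjacency

theorem Adjacent.symm {u v : Vtx m} (h : Adjacent u v) : Adjacent v u := by
  cases u <;> cases v <;> simp only [Adjacent] at h ⊢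
  · rcases h with rfl | rfl <;> simp
  · exact ⟨h.1.symm, h.2.symm⟩

theorem Adjacent.exists_eq_tri {u : Vtx m} (h : Adjacent u (.tri i 1)) :
    ∃ j ≠ 1, u = .tri i j := by
  cases u with
  | cycle t => exact h.elim
  | tri k j =>
    obtain ⟨rfl, hj⟩ := h
    exact ⟨j, hj, rfl⟩

theorem Adjacent.exists_eq_cycle {u : Vtx m} (h : Adjacent u (.cycle (pairC i 1))) :
    ∃ j ≠ 1, u = .cycle (pairC i j) := by
  cases u with
  | tri k j => exact h.elim
  | cycle t =>
    rcases h with h | h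
    · exact ⟨0, by decide, by rw [← pairC_one_sub_one, h, add_sub_cancel_right]⟩
    · exact ⟨2, by decide, by rw [← pairC_one_add_one, h, sub_add_cancel]⟩

theorem Adjacent.exists_perm_swap_tri {u v : Vtx m} (h : Adjacent u v) (i : Fin m) :
    ∃ e : Equiv.Perm (ZMod 3), ∀ j, Equiv.swap u v (.tri i j) = .tri i (e j) := by
  rcases u with s | ⟨k, a⟩ <;> rcases v with t | ⟨l, b⟩
  · exact ⟨1, fun j => Equiv.swap_apply_of_ne_of_ne (by simp) (by simp)⟩
  · exact h.elim
  · exact h.elim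
  · obtain rfl : k = l := h.1
    rcases eq_or_ne i k with rfl | hik
    · have htri : Function.Injective (Vtx.tri i) := fun _ _ h => (Vtx.tri.inj h).2
      exact ⟨Equiv.swap a b, fun j => htri.swap_apply a b j⟩
    · exact ⟨1, fun j => Equiv.swap_apply_of_ne_of_ne (by simp [hik]) (by simp [hik])⟩

end Adjacency

section Moves

/-- The move `mv` is a jump: the chip moves to an adjacent vacant vertex. -/
def Move.IsJump (mv : Move m) : Prop :=
  Adjacent mv.from' mv.to' ∧ mv.src.occ mv.to' = .empty

/-- The move `mv` is a swap: the chip is exchanged with the switch on the other vertex of its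
pair. -/
def Move.IsSwap (mv : Move m) : Prop :=
  IsPair mv.from' mv.to' ∧ mv.src.occ mv.to' = .switch

/-- The time reversal of a move. -/
def Move.reverse (mv : Move m) : Move m where
  src := mv.dst
  dst := mv.src
  from' := mv.to'
  to' := mv.from'

theorem Move.Legal.isJump_or_isSwap (h : mv.Legal) : mv.IsJump ∨ mv.IsSwap :=
  h.2.1

theorem Move.Legal.isJump_reverse (h : mv.Legal) (hj : mv.IsJump) : mv.reverse.IsJump :=
  ⟨hj.1.symm, h.2.2.2.1.trans hj.2⟩

theorem Move.Legal.isSwap_reverse (h : mv.Legal) (hs : mv.IsSwap) : mv.reverse.IsSwap :=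
  ⟨hs.1.symm, h.2.2.2.1.trans hs.2⟩

theorem Move.Legal.reverse (h : mv.Legal) : mv.reverse.Legal :=
  ⟨h.2.2.1, h.isJump_or_isSwap.imp h.isJump_reverse h.isSwap_reverse, h.1, h.2.2.2.1.symm,
    fun w hto hfrom => (h.2.2.2.2 w hfrom hto).symm⟩

theorem Move.Legal.dst_occ (h : mv.Legal) (w : Vtx m) :
    mv.dst.occ w = mv.src.occ (Equiv.swap mv.from' mv.to' w) := by
  obtain ⟨hfrom, -, hto, hleft, hother⟩ := h
  rcases eq_or_ne w mv.from' with rfl | hwf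
  · rw [Equiv.swap_apply_left, hleft]
  rcases eq_or_ne w mv.to' with rfl | hwt
  · rw [Equiv.swap_apply_right, hto, hfrom]
  · rw [Equiv.swap_apply_of_ne_of_ne hwf hwt, hother w hwf hwt]

theorem Move.Legal.src_occ_eq_chip_iff (h : mv.Legal) {v : Vtx m} :
    mv.src.occ v = .chip ↔ mv.from' = v :=
  ⟨fun hv => mv.src.chip_exists_unique.unique h.1 hv, fun hv => hv ▸ h.1⟩

theorem Move.Legal.dst_occ_eq_chip_iff (h : mv.Legal) {v : Vtx m} :
    mv.dst.occ v = .chip ↔ mv.to' = v :=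
  h.reverse.src_occ_eq_chip_iff

theorem Move.Legal.dst_occ_eq_empty_iff_of_isSwap (h : mv.Legal) (hs : mv.IsSwap) (v : Vtx m) :
    mv.dst.occ v = .empty ↔ mv.src.occ v = .empty := by
  obtain ⟨hfrom, -, hto, hleft, hother⟩ := h
  rcases eq_or_ne v mv.from' with rfl | hvf
  · simp [hleft, hs.2, hfrom]
  rcases eq_or_ne v mv.to' with rfl | hvt
  · simp [hto, hs.2]
  · rw [hother v hvf hvt]

end Moves

section Vacancy

/-- Triangle `i` has exactly one vacant vertex. This is the invariant of the game that drives the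
proof. -/
def UniqueVacancy (P : Pos m) (i : Fin m) : Prop :=
  ∃! j : ZMod 3, P.occ (.tri i j) = .empty

theorem IsStarting.uniqueVacancy (hP : IsStarting P) (i : Fin m) : UniqueVacancy P i := by
  obtain ⟨h0, h1, h2, -⟩ := hP.1 i
  refine ⟨1, h1, fun j hj => ?_⟩
  fin_cases j
  · exact absurd (h0.symm.trans hj) (by decide)
  · rfl
  · exact absurd (h2.symm.trans hj) (by decide)

theorem Move.Legal.uniqueVacancy_of_isJump (h : mv.Legal) (hj : mv.IsJump)
    (hv : UniqueVacancy mv.src i) : UniqueVacancy mv.dst i := by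
  obtain ⟨e, he⟩ := hj.1.exists_perm_swap_tri i
  exact (e.existsUnique_congr fun {j} => by rw [h.dst_occ, he]).mpr hv

theorem Move.Legal.uniqueVacancy (h : mv.Legal) (hv : UniqueVacancy mv.src i) :
    UniqueVacancy mv.dst i := by
  rcases h.isJump_or_isSwap with hj | hs
  · exact h.uniqueVacancy_of_isJump hj hv
  · simpa only [UniqueVacancy, h.dst_occ_eq_empty_iff_of_isSwap hs] using hv

end Vacancy

section Flow

/-- The contribution to the flow through `v` of the chip arriving at `v`: `1` from the predecessor
of `v`, and `-1` from its successor. -/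
def arrivalSign (v source target : Vtx m) : ℤ :=
  if target = v then (if source = prv v then 1 else 0) - (if source = nxt v then 1 else 0) else 0

theorem jmpCount_cons (mv : Move m) (σ : List (Move m)) (u v : Vtx m) :
    jmpCount (mv :: σ) u v = (if mv.from' = u ∧ mv.to' = v then 1 else 0) + jmpCount σ u v := by
  simp only [jmpCount, List.filter_cons, decide_eq_true_eq]
  split_ifs <;> simp [add_comm]

theorem dflow_cons (mv : Move m) (σ : List (Move m)) (v : Vtx m) :
    dflow (mv :: σ) v =
      arrivalSign v mv.from' mv.to' - arrivalSign v mv.to' mv.from' + dflow σ v := by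
  simp only [dflow, jmpCount_cons, arrivalSign]
  push_cast
  grind

/-- The side of a triangle vertex relative to the middle vertex `1`: `1` for its predecessor `0`,
and `-1` for its successor `2`. -/
def side (j : ZMod 3) : ℤ :=
  (if j = 0 then 1 else 0) - (if j = 2 then 1 else 0)

theorem side_eq_neg_side : ∀ {j k : ZMod 3}, j ≠ 1 → k ≠ 1 → k ≠ j → side k = -side j := by
  decide

theorem arrivalSign_tri (i : Fin m) (j : ZMod 3) :
    arrivalSign (.tri i 1) (.tri i j) (.tri i 1) = side j := by
  have hprv : prv (.tri i 1 : Vtx m) = .tri i 0 := rfl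
  have hnxt : nxt (.tri i 1 : Vtx m) = .tri i 2 := rfl
  simp [arrivalSign, side, hprv, hnxt]

theorem arrivalSign_cycle (i : Fin m) (j : ZMod 3) :
    arrivalSign (.cycle (pairC i 1)) (.cycle (pairC i j)) (.cycle (pairC i 1)) = side j := by
  simp [arrivalSign, side, prv, nxt, pairC_one_sub_one, pairC_one_add_one, pairC_inj]

theorem arrivalSign_eq_zero_of_ne {v source target : Vtx m} (h : target ≠ v) :
    arrivalSign v source target = 0 :=
  if_neg h

theorem arrivalSign_eq_zero_of_isPair {v source target : Vtx m} (h : IsPair source target) :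
    arrivalSign v source target = 0 := by
  cases source <;> cases target <;> cases v <;> simp_all [arrivalSign, IsPair, prv, nxt]

end Flow

section Potential

/-- The potential of a position with respect to triangle `i`: if the chip is on the middle pair
`{(i,2), (0,3i-1)}`, the side of the vacancy of the triangle, and `0` otherwise. The vacancy is
encoded as a sum over all vacant vertices, of which there is one under `UniqueVacancy`. -/
def potential (P : Pos m) (i : Fin m) : ℤ :=
  if P.occ (.tri i 1) = .chip ∨ P.occ (.cycle (pairC i 1)) = .chip then
    ∑ j with P.occ (.tri i j) = .empty, side j
  else 0

theorem potential_eq_side {j : ZMod 3} (hv : UniqueVacancy P i)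
    (hchip : P.occ (.tri i 1) = .chip ∨ P.occ (.cycle (pairC i 1)) = .chip)
    (hj : P.occ (.tri i j) = .empty) : potential P i = side j := by
  have hfilter : ({k | P.occ (.tri i k) = .empty} : Finset (ZMod 3)) = {j} := by
    ext k
    simpa using ⟨fun hk => hv.unique hk hj, fun hk => hk ▸ hj⟩
  rw [potential, if_pos hchip, hfilter, Finset.sum_singleton]

theorem potential_eq_neg_side {j : ZMod 3} (hv : UniqueVacancy P i) (hj : j ≠ 1)
    (hchip : P.occ (.cycle (pairC i 1)) = .chip) (hempty : P.occ (.cycle (pairC i j)) = .empty) :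
    potential P i = -side j := by
  have hmiddle : P.occ (.tri i 1) = .switch := (P.switch_pair i 1).resolve_right (by simp [hchip])
  have hside : P.occ (.tri i j) = .switch := (P.switch_pair i j).resolve_right (by simp [hempty])
  obtain ⟨k, hk⟩ := hv.exists
  have hk_ne_one : k ≠ 1 := by rintro rfl; simp [hmiddle] at hk
  have hk_ne_j : k ≠ j := by rintro rfl; simp [hside] at hk
  rw [potential_eq_side hv (.inr hchip) hk, side_eq_neg_side hj hk_ne_one hk_ne_j]

theorem Move.Legal.potential_dst_of_isJump (h : mv.Legal) (hjump : mv.IsJump)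
    (hv : UniqueVacancy mv.dst i) :
    potential mv.dst i = arrivalSign (.tri i 1) mv.from' mv.to' -
      arrivalSign (.cycle (pairC i 1)) mv.from' mv.to' := by
  have hleft : mv.dst.occ mv.from' = .empty := (h.isJump_reverse hjump).2
  have hadj := hjump.1
  by_cases htri : mv.to' = .tri i 1
  · rw [htri] at hadj ⊢
    obtain ⟨j, -, hfrom⟩ := hadj.exists_eq_tri
    rw [hfrom] at hleft ⊢
    rw [potential_eq_side hv (.inl (h.dst_occ_eq_chip_iff.mpr htri)) hleft, arrivalSign_tri,
      arrivalSign_eq_zero_of_ne (by simp), sub_zero]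
  by_cases hcycle : mv.to' = .cycle (pairC i 1)
  · rw [hcycle] at hadj ⊢
    obtain ⟨j, hj, hfrom⟩ := hadj.exists_eq_cycle
    rw [hfrom] at hleft ⊢
    rw [potential_eq_neg_side hv hj (h.dst_occ_eq_chip_iff.mpr hcycle) hleft, arrivalSign_cycle,
      arrivalSign_eq_zero_of_ne (by simp), zero_sub]
  · rw [arrivalSign_eq_zero_of_ne htri, arrivalSign_eq_zero_of_ne hcycle, sub_zero, potential,
      if_neg (by simp [h.dst_occ_eq_chip_iff, htri, hcycle])]

theorem Move.Legal.potential_dst_of_isSwap (h : mv.Legal) (hs : mv.IsSwap) (i : Fin m) :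
    potential mv.dst i = potential mv.src i := by
  simp only [potential, h.dst_occ_eq_chip_iff, h.src_occ_eq_chip_iff, hs.1.eq_middle_iff,
    h.dst_occ_eq_empty_iff_of_isSwap hs]

theorem Move.Legal.potential_sub (h : mv.Legal) (hv : UniqueVacancy mv.src i) :
    potential mv.dst i - potential mv.src i =
      (arrivalSign (.tri i 1) mv.from' mv.to' - arrivalSign (.tri i 1) mv.to' mv.from') -
      (arrivalSign (.cycle (pairC i 1)) mv.from' mv.to' -
        arrivalSign (.cycle (pairC i 1)) mv.to' mv.from') := by
  rcases h.isJump_or_isSwap with hjump | hs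
  · have hdst := h.potential_dst_of_isJump hjump (h.uniqueVacancy hv)
    have hsrc : potential mv.src i = arrivalSign (.tri i 1) mv.to' mv.from' -
        arrivalSign (.cycle (pairC i 1)) mv.to' mv.from' :=
      h.reverse.potential_dst_of_isJump (h.isJump_reverse hjump) hv
    rw [hdst, hsrc]
    ring
  · simp only [h.potential_dst_of_isSwap hs, arrivalSign_eq_zero_of_isPair hs.1,
      arrivalSign_eq_zero_of_isPair hs.1.symm, sub_self]

theorem Leads.dflow_sub_dflow {σ : List (Move m)} {A B : Pos m} (h : Leads σ A B)
    (hv : UniqueVacancy A i) :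
    dflow σ (.tri i 1) - dflow σ (.cycle (pairC i 1)) = potential B i - potential A i := by
  induction h with
  | nil A => simp [dflow, jmpCount]
  | cons mv σ B hlegal _ ih =>
    have hstep := hlegal.potential_sub hv
    have hrest := ih (hlegal.uniqueVacancy hv)
    rw [dflow_cons, dflow_cons]
    linarith

end Potential

end AuxGame

open AuxGame in
theorem statement0_general {m : ℕ} {P : Pos m} {σ : List (Move m)} {i : Fin m}
    (hP : UniqueVacancy P i) (hσ : Leads σ P P) :
    flow σ (Vtx.tri i 1) = flow σ (Vtx.cycle (pairC i 1)) := by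
  have hdflow : dflow σ (.tri i 1) = dflow σ (.cycle (pairC i 1)) :=
    sub_eq_zero.mp ((hσ.dflow_sub_dflow hP).trans (sub_self _))
  rw [flow, flow, hdflow]

open AuxGame in
/-- Lemma 1 of the paper.  For every legal sequence `σ` in the
auxiliary game whose initial and resulting positions both equal the starting
position `P`, the flow through the middle triangle vertex `(i,2)` equals the
flow through the cycle vertex `(0,3i-1)`, for every `1 ≤ i ≤ m`.
(0-based: `(i,2)` is `Vtx.tri i 1` and `(0,3i-1)` is `Vtx.cycle (pairC i 1)`.) -/
theorem statement0 (m : ℕ) (hm : 1 ≤ m) (P : Pos m) (hP : IsStarting P)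
    (σ : List (Move m)) (hσ : Leads σ P P) (i : Fin m) :
    flow σ (Vtx.tri i 1) = flow σ (Vtx.cycle (pairC i 1)) :=
  statement0_general (hP.uniqueVacancy i) hσ
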